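/- The map q ↦ (α_i(q)) is a strictly increasing bijection from the open interval (1, ∞) onto the set of all infinite sequences (α_i) of nonnegative integers satisfying α_{k+1} α_{k+2} ... ≤ α_1 α_2 ... lexicographically for all k ≥ 1. (Here a sequence is called infinite if it has infinitely many nonzero terms, and 'strictly increasing' refers to the lexicographic order on sequences.) -/

import Mathlib

/-!
For a base `q > 1` the quasi-greedy remainders `y` of `1` satisfy `y 0 = 1`, `0 < y n ≤ 1` and
`y (n + 1) = q * y n - α n`, and these conditions determine the digits `α` completely
(`alphaSeq_eq_of_rem`).

*Order.* As long as two digit sequences agree, the remainder belonging to the larger base and the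
larger starting point stays the larger one, and the digit is monotone in `q * y`. Hence the first
disagreement has the right sign (`lexLe_of_rem`). Applied to one base and the starting points
`y k ≤ 1`, this gives the lexicographic condition on tails; applied to two bases it gives
monotonicity. The digits cannot all agree for `q < r`, since the difference of the remainders
would be multiplied by at least `r` at each step, while it is bounded by `1`.

*Surjectivity.* Let `s` be infinite with all tails at most `s`. The intermediate value theorem
for `x ↦ ∑ s i * x ^ (i + 1)` yields `q > 1` with `∑ s i / q ^ (i + 1) = 1` (`exists_base`). The
values `y n` of the tails of `s` are positive and satisfy the recurrence, so it remains to see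
`y n ≤ 1`. With `M = sup y`, comparing the `k`-th tail with `s` at the first disagreement gives
`q * (y k - 1) ≤ M - 1`, whence `q * (M - 1) ≤ M - 1` and `M ≤ 1` (`rem_le_one`).
If there is no disagreement, then `y k = 1` because the remainders are bounded.
-/

noncomputable section

/-- The largest integer smaller than `q`, as a natural number (for `q > 1` this is `⌈q⌉ - 1`). -/
def topDigit (q : ℝ) : ℕ := ⌈q⌉.toNat - 1

/-- Greedy digit associated to a remainder `y` : the largest nonnegative integer `b` with
`b < q` and `b ≤ q * y`. -/
def gDigit (q y : ℝ) : ℕ := min (topDigit q) ⌊q * y⌋₊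

/-- Remainders of the greedy algorithm in base `q` starting from `x`. -/
def gRem (q x : ℝ) : ℕ → ℝ
  | 0 => x
  | n + 1 => q * gRem q x n - gDigit q (gRem q x n)

/-- The greedy expansion of `x` in base `q`, `0`-indexed: `greedy q x n` is the digit `b_{n+1}`,
i.e. the largest integer smaller than `q` such that `∑_{i ≤ n} (greedy q x i) / q^(i+1) ≤ x`. -/
def greedy (q x : ℝ) (n : ℕ) : ℕ := gDigit q (gRem q x n)

/-- Quasi-greedy digit associated to a remainder `y` : the largest nonnegative integer `b` with
`b < q` and `b < q * y` (it is `0` when no such integer exists, matching the convention that the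
quasi-greedy expansion of `0` is `0^∞`). -/
def qgDigit (q y : ℝ) : ℕ := min (topDigit q) (⌈q * y⌉.toNat - 1)

/-- Remainders of the quasi-greedy algorithm in base `q` starting from `x`. -/
def qgRem (q x : ℝ) : ℕ → ℝ
  | 0 => x
  | n + 1 => q * qgRem q x n - qgDigit q (qgRem q x n)

/-- The quasi-greedy expansion of `x` in base `q`, `0`-indexed: `quasiGreedy q x n` is the digit
`a_{n+1}`, i.e. the largest integer smaller than `q` with `∑_{i ≤ n} (quasiGreedy q x i) / q^(i+1) < x`
(with the convention `quasiGreedy q 0 = 0^∞`). -/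
def quasiGreedy (q x : ℝ) (n : ℕ) : ℕ := qgDigit q (qgRem q x n)

/-- `alphaSeq q` is the quasi-greedy expansion of `1` in base `q` (`0`-indexed:
`alphaSeq q (i-1) = α_i(q)`). -/
def alphaSeq (q : ℝ) : ℕ → ℕ := quasiGreedy q 1

/-- Strict lexicographic order on digit sequences. -/
def lexLt (a b : ℕ → ℕ) : Prop := ∃ n, (∀ i, i < n → a i = b i) ∧ a n < b n

/-- Lexicographic order on digit sequences. -/
def lexLe (a b : ℕ → ℕ) : Prop := lexLt a b ∨ a = b

/-- `c` is an expansion of `x` in base `q`: the digits are nonnegative integers smaller than `q`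
and `x = ∑_{i≥0} c_i / q^(i+1)`. -/
def IsExpansion (q : ℝ) (c : ℕ → ℕ) (x : ℝ) : Prop :=
  (∀ i, (c i : ℝ) < q) ∧ x = ∑' i : ℕ, (c i : ℝ) / q ^ (i + 1)

/-- The interval `J_q = [0, (⌈q⌉-1)/(q-1)]` of numbers having an expansion in base `q`. -/
def Jset (q : ℝ) : Set ℝ := Set.Icc 0 (((⌈q⌉ : ℝ) - 1) / (q - 1))

/-- `USet q` is the set `𝒰_q` of numbers `x ∈ J_q` having a unique expansion in base `q`. -/
def USet (q : ℝ) : Set ℝ := {x | x ∈ Jset q ∧ ∃! c, IsExpansion q c x}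

/-- `USeq q` is the set `𝒰_q'` of univoque sequences in base `q`, i.e. sequences that are the
unique expansion in base `q` of some number. -/
def USeq (q : ℝ) : Set (ℕ → ℕ) :=
  {c | ∃ x, IsExpansion q c x ∧ ∀ c', IsExpansion q c' x → c' = c}

/-- The set `𝒰` of univoque bases: `q > 1` such that `1` has a unique expansion in base `q`. -/
def UnivBases : Set ℝ := {q | 1 < q ∧ ∃! c, IsExpansion q c 1}

/-- The set `𝒱_q`: numbers `x ∈ J_q` whose quasi-greedy expansion `(a_i)` satisfies
`overline{a_{n+1} a_{n+2} …} ≤ α_1 α_2 …` whenever `a_n > 0`. -/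
def VSet (q : ℝ) : Set ℝ :=
  {x | x ∈ Jset q ∧ ∀ n, 0 < quasiGreedy q x n →
    lexLe (fun i => topDigit q - quasiGreedy q x (n + 1 + i)) (alphaSeq q)}

/-- `VSeq q` is the set `𝒱_q'` of quasi-greedy expansions of elements of `𝒱_q`. -/
def VSeq (q : ℝ) : Set (ℕ → ℕ) := (fun x => quasiGreedy q x) '' VSet q

/-- The set `𝒱` of bases `q > 1` with `overline{α_{k+1} α_{k+2} …} ≤ α_1 α_2 …` for all `k ≥ 1`. -/
def VBases : Set ℝ :=
  {q | 1 < q ∧ ∀ k, 1 ≤ k → lexLe (fun i => topDigit q - alphaSeq q (k + i)) (alphaSeq q)}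

/-- A digit sequence is infinite if it has infinitely many nonzero terms. -/
def InfiniteSeq (c : ℕ → ℕ) : Prop := ∀ N, ∃ i, N ≤ i ∧ c i ≠ 0

/-- A digit sequence is ultimately periodic if some tail of it is periodic. -/
def UltimatelyPeriodic (c : ℕ → ℕ) : Prop := ∃ n p, 0 < p ∧ ∀ i, n ≤ i → c (i + p) = c i

end

/-! ### The quasi-greedy remainders -/

theorem qgDigit_eq {q y : ℝ} (hq : 1 < q) (hy : 0 < y) (hy1 : y ≤ 1) :
    ((qgDigit q y : ℕ) : ℤ) = ⌈q * y⌉ - 1 := by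
  have h1 : ⌈q * y⌉ ≤ ⌈q⌉ := Int.ceil_le_ceil (by nlinarith)
  have h2 : 0 < ⌈q * y⌉ := Int.ceil_pos.2 (by positivity)
  unfold qgDigit topDigit
  omega

/-- A natural number `d` is the quasi-greedy digit of `y` as soon as the next remainder
`q * y - d` lies in `(0, 1]`. -/
theorem qgDigit_eq_of_mem {q y : ℝ} {d : ℕ} (hq : 1 < q) (hy : 0 < y) (hy1 : y ≤ 1)
    (h0 : 0 < q * y - d) (h1 : q * y - d ≤ 1) : qgDigit q y = d := by
  have h := qgDigit_eq hq hy hy1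
  have hc : ⌈q * y⌉ = (d : ℤ) + 1 := by
    rw [Int.ceil_eq_iff]
    push_cast
    constructor <;> linarith
  omega

theorem qgRem_succ_mem {q y : ℝ} (hq : 1 < q) (hy : 0 < y) (hy1 : y ≤ 1) :
    0 < q * y - qgDigit q y ∧ q * y - qgDigit q y ≤ 1 := by
  have h := qgDigit_eq hq hy hy1
  have h' : (qgDigit q y : ℝ) = (⌈q * y⌉ : ℝ) - 1 := by exact_mod_cast h
  have h1 := Int.ceil_lt_add_one (q * y)
  have h2 := Int.le_ceil (q * y)
  rw [h']
  constructor <;> linarith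

theorem qgRem_mem {q : ℝ} (hq : 1 < q) (n : ℕ) : 0 < qgRem q 1 n ∧ qgRem q 1 n ≤ 1 := by
  induction n with
  | zero => simp [qgRem]
  | succ n ih => exact qgRem_succ_mem hq ih.1 ih.2

theorem qgRem_succ (q : ℝ) (n : ℕ) :
    qgRem q 1 (n + 1) = q * qgRem q 1 n - alphaSeq q n := rfl

/-- The remainder conditions characterize the quasi-greedy expansion of `1`. -/
theorem alphaSeq_eq_of_rem {q : ℝ} {s : ℕ → ℕ} {y : ℕ → ℝ} (hq : 1 < q) (h0 : y 0 = 1)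
    (hpos : ∀ n, 0 < y n) (hle : ∀ n, y n ≤ 1) (hrec : ∀ n, y (n + 1) = q * y n - s n) :
    alphaSeq q = s := by
  have hd : ∀ n, qgDigit q (y n) = s n := fun n =>
    qgDigit_eq_of_mem hq (hpos n) (hle n) (by rw [← hrec]; exact hpos _)
      (by rw [← hrec]; exact hle _)
  have hy : ∀ n, qgRem q 1 n = y n := by
    intro n
    induction n with
    | zero => simp [qgRem, h0]
    | succ n ih => rw [qgRem, ih, hd, hrec]
  funext n
  rw [alphaSeq, quasiGreedy, hy, hd]

/-! ### Monotonicity and the lexicographic condition -/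

theorem lexLe_of_first_diff {a b : ℕ → ℕ}
    (h : ∀ n, (∀ i, i < n → a i = b i) → a n ≤ b n) : lexLe a b := by
  by_cases hab : a = b
  · exact Or.inr hab
  · left
    have hex : ∃ n, a n ≠ b n := Function.ne_iff.1 hab
    classical
    have hmin : ∀ i, i < Nat.find hex → a i = b i := fun i hi => by
      simpa using Nat.find_min hex hi
    exact ⟨Nat.find hex, hmin, lt_of_le_of_ne (h _ hmin) (Nat.find_spec hex)⟩

/-- The digit sequence produced by remainders in `(0, 1]` is lexicographically monotone in the
base and in the starting remainder. -/
theorem lexLe_of_rem {q r : ℝ} {a b : ℕ → ℕ} {y z : ℕ → ℝ} (hq : 1 < q) (hqr : q ≤ r)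
    (hy : ∀ n, 0 < y n ∧ y n ≤ 1) (hz : ∀ n, 0 < z n ∧ z n ≤ 1)
    (hyr : ∀ n, y (n + 1) = q * y n - a n) (hzr : ∀ n, z (n + 1) = r * z n - b n)
    (h0 : y 0 ≤ z 0) : lexLe a b := by
  apply lexLe_of_first_diff
  intro n hn
  have hle : ∀ m, m ≤ n → y m ≤ z m := by
    intro m
    induction m with
    | zero => intro _; exact h0
    | succ m ih =>
      intro hm
      have h1 := ih (by omega)
      rw [hyr, hzr, hn m (by omega)]
      have := mul_le_mul hqr h1 (hy m).1.le (by linarith)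
      linarith
  have h1 := mul_le_mul hqr (hle n le_rfl) (hy n).1.le (by linarith)
  have h2 := (hy (n + 1)).1
  have h3 := (hz (n + 1)).2
  rw [hyr] at h2
  rw [hzr] at h3
  have h4 : (a n : ℝ) < b n + 1 := by linarith
  exact Nat.lt_succ_iff.1 (by exact_mod_cast h4)

theorem alphaSeq_strictMono {q r : ℝ} (hq : 1 < q) (hqr : q < r) :
    lexLt (alphaSeq q) (alphaSeq r) := by
  have hr : 1 < r := hq.trans hqr
  rcases lexLe_of_rem hq hqr.le (qgRem_mem hq) (qgRem_mem hr) (qgRem_succ q) (qgRem_succ r)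
    (by simp [qgRem]) with h | h
  · exact h
  · exfalso
    have hgrow : ∀ n, (r - q) * r ^ n ≤ qgRem r 1 (n + 1) - qgRem q 1 (n + 1) := by
      intro n
      induction n with
      | zero => rw [qgRem_succ, qgRem_succ, h]; simp [qgRem]
      | succ n ih =>
        rw [qgRem_succ, qgRem_succ q, h, pow_succ]
        have h1 := (qgRem_mem hq (n + 1)).1
        nlinarith
    obtain ⟨n, hn⟩ := pow_unbounded_of_one_lt (1 / (r - q)) hr
    have h1 := hgrow n
    have h2 := (qgRem_mem hr (n + 1)).2
    have h3 := (qgRem_mem hq (n + 1)).1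
    rw [div_lt_iff₀ (by linarith)] at hn
    linarith

theorem alphaSeq_infinite {q : ℝ} (hq : 1 < q) : InfiniteSeq (alphaSeq q) := by
  intro N
  by_contra! hcon
  have hgrow : ∀ n, qgRem q 1 (N + n) = qgRem q 1 N * q ^ n := by
    intro n
    induction n with
    | zero => simp
    | succ n ih =>
      rw [← add_assoc, qgRem_succ, hcon _ (by omega), ih]
      push_cast
      ring
  have hN := (qgRem_mem hq N).1
  obtain ⟨n, hn⟩ := pow_unbounded_of_one_lt (1 / qgRem q 1 N) hq
  rw [div_lt_iff₀ hN] at hn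
  have h1 := (qgRem_mem hq (N + n)).2
  rw [hgrow] at h1
  linarith

theorem alphaSeq_tail_le {q : ℝ} (hq : 1 < q) (k : ℕ) :
    lexLe (fun i => alphaSeq q (k + i)) (alphaSeq q) :=
  lexLe_of_rem (y := fun n => qgRem q 1 (k + n)) hq le_rfl (fun n => qgRem_mem hq (k + n))
    (qgRem_mem hq) (fun n => qgRem_succ q (k + n)) (qgRem_succ q) (qgRem_mem hq k).2

/-! ### Surjectivity -/

/-- Bounded positive remainders of a sequence that dominates all its tails are at most `1`. -/
theorem rem_le_one {q B : ℝ} {s : ℕ → ℕ} {y : ℕ → ℝ} (hq : 1 < q) (h0 : y 0 = 1)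
    (hpos : ∀ n, 0 < y n) (hB : ∀ n, y n ≤ B) (hrec : ∀ n, y (n + 1) = q * y n - s n)
    (hs : ∀ k, 1 ≤ k → lexLe (fun i => s (k + i)) s) (n : ℕ) : y n ≤ 1 := by
  have hbdd : BddAbove (Set.range y) := ⟨B, by rintro _ ⟨n, rfl⟩; exact hB n⟩
  set M := ⨆ n, y n with hM
  have hyM : ∀ n, y n ≤ M := fun n => le_ciSup hbdd n
  have hM1 : 1 ≤ M := h0 ▸ hyM 0
  -- While the tail and `s` agree, the difference of remainders is multiplied by `q`.
  have hdiff : ∀ k n, (∀ i, i < n → s (k + i) = s i) →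
      y (k + n) - y n = q ^ n * (y k - 1) := by
    intro k n
    induction n with
    | zero => intro _; simp [h0]
    | succ n ih =>
      intro h
      have h1 := ih fun i hi => h i (by omega)
      rw [← add_assoc, hrec, hrec, h n (by omega), pow_succ]
      linear_combination q * h1
  have key : ∀ k, q * (y k - 1) ≤ M - 1 := by
    intro k
    rcases le_or_gt (y k) 1 with hk | hk
    · nlinarith
    have hk1 : 1 ≤ k := by
      rcases Nat.eq_zero_or_pos k with rfl | h
      · linarith
      · exact h
    have hqk : 0 < y k - 1 := by linarith
    rcases hs k hk1 with ⟨n, hn, hlt⟩ | heq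
    · have h1 := hdiff k n hn
      have h2 := hyM (k + n + 1)
      have h3 := hpos (n + 1)
      rw [hrec] at h2 h3
      have h4 : (s (k + n) : ℝ) + 1 ≤ s n := by exact_mod_cast hlt
      have h5 : q * (q ^ n * (y k - 1)) ≤ M - 1 := by rw [← h1]; linarith
      have h6 : 1 * (y k - 1) ≤ q ^ n * (y k - 1) :=
        mul_le_mul_of_nonneg_right (one_le_pow₀ hq.le) hqk.le
      nlinarith
    · -- If the tail equals `s`, an excess of `y k` over `1` would grow without bound.
      exfalso
      obtain ⟨n, hn⟩ := pow_unbounded_of_one_lt (M / (y k - 1)) hq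
      rw [div_lt_iff₀ hqk] at hn
      have h1 := hdiff k n fun i _ => congrFun heq i
      have h2 := hyM (k + n)
      have h3 := hpos n
      linarith
  have hle : M ≤ 1 + (M - 1) / q := ciSup_le fun k => by
    have h1 : y k - 1 ≤ (M - 1) / q := by
      rw [le_div_iff₀ (by linarith)]
      linarith [key k]
    linarith
  have h1 : (M - 1) * q ≤ M - 1 := by
    rw [← le_div_iff₀ (by linarith)]
    linarith
  have h2 : M ≤ 1 := by nlinarith
  exact (hyM n).trans h2

theorem summable_digits {s : ℕ → ℕ} {C : ℕ} (hC : ∀ i, s i ≤ C) {x : ℝ} (hx0 : 0 ≤ x)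
    (hx1 : x < 1) : Summable fun i => (s i : ℝ) * x ^ (i + 1) := by
  have hg : Summable fun i : ℕ => (C : ℝ) * x ^ (i + 1) :=
    ((summable_nat_add_iff 1).2 (summable_geometric_of_lt_one hx0 hx1)).mul_left _
  refine Summable.of_nonneg_of_le (fun i => by positivity) (fun i => ?_) hg
  exact mul_le_mul_of_nonneg_right (by exact_mod_cast hC i) (by positivity)

theorem tsum_digits_le {s : ℕ → ℕ} {C : ℕ} (hC : ∀ i, s i ≤ C) {x : ℝ} (hx0 : 0 ≤ x)
    (hx1 : x < 1) : ∑' i, (s i : ℝ) * x ^ (i + 1) ≤ C * (x * (1 - x)⁻¹) := by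
  have hg : HasSum (fun i : ℕ => (C : ℝ) * x ^ (i + 1)) (C * (x * (1 - x)⁻¹)) := by
    have := ((hasSum_geometric_of_lt_one hx0 hx1).mul_left x).mul_left (C : ℝ)
    simpa only [pow_succ'] using this
  refine (summable_digits hC hx0 hx1).tsum_le_of_sum_le fun t => ?_
  refine (Finset.sum_le_sum fun i _ => ?_).trans
    (sum_le_hasSum t (fun i _ => by positivity) hg)
  exact mul_le_mul_of_nonneg_right (by exact_mod_cast hC i) (by positivity)

/-- The reciprocal `x` of the base: `1 / (s 0 + 1)` gives a value at most `1`, and two nonzero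
digits already force a value above `1` for `x` near `1`. -/
theorem exists_base {s : ℕ → ℕ} (hinf : InfiniteSeq s) (hC : ∀ i, s i ≤ s 0) :
    ∃ x : ℝ, 0 < x ∧ x < 1 ∧ ∑' i, (s i : ℝ) * x ^ (i + 1) = 1 := by
  obtain ⟨j, hj, hsj⟩ := hinf 1
  have hs0 : 1 ≤ s 0 := (Nat.one_le_iff_ne_zero.2 hsj).trans (hC j)
  have hs0' : (1 : ℝ) ≤ s 0 := by exact_mod_cast hs0
  have hsj' : (1 : ℝ) ≤ s j := by exact_mod_cast Nat.one_le_iff_ne_zero.2 hsj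
  set a : ℝ := 1 / ((s 0 : ℝ) + 1) with ha
  have ha0 : 0 < a := by positivity
  have ha1 : a < 1 := by
    rw [ha, div_lt_one (by positivity)]
    linarith
  obtain ⟨b, hb1, hab, hb⟩ : ∃ b : ℝ, b < 1 ∧ a < b ∧ 1 < b ^ (0 + 1) + b ^ (j + 1) := by
    have hcont : Continuous fun b : ℝ => b ^ (0 + 1) + b ^ (j + 1) := by fun_prop
    have h1 : ∀ᶠ b in nhdsWithin (1 : ℝ) (Set.Iio 1), 1 < b ^ (0 + 1) + b ^ (j + 1) :=
      nhdsWithin_le_nhds (hcont.continuousAt.eventually (lt_mem_nhds (by norm_num)))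
    have h2 : ∀ᶠ b in nhdsWithin (1 : ℝ) (Set.Iio 1), a < b :=
      nhdsWithin_le_nhds (lt_mem_nhds ha1)
    have h3 : ∀ᶠ b in nhdsWithin (1 : ℝ) (Set.Iio 1), b < 1 := self_mem_nhdsWithin
    obtain ⟨b, hb⟩ := (h1.and (h2.and h3)).exists
    exact ⟨b, hb.2.2, hb.2.1, hb.1⟩
  have hb0 : 0 < b := ha0.trans hab
  have hcont : ContinuousOn (fun x : ℝ => ∑' i, (s i : ℝ) * x ^ (i + 1)) (Set.Icc a b) := by
    refine continuousOn_tsum (fun i => by fun_prop) (summable_digits hC hb0.le hb1) ?_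
    intro i x hx
    have hx0 : 0 ≤ x := ha0.le.trans hx.1
    rw [Real.norm_of_nonneg (by positivity)]
    have := hx.2
    gcongr
  have hfa : ∑' i, (s i : ℝ) * a ^ (i + 1) ≤ 1 := by
    refine (tsum_digits_le hC ha0.le ha1).trans (le_of_eq ?_)
    have h : 1 - a = s 0 * a := by rw [ha]; field_simp; ring
    have : (s 0 : ℝ) ≠ 0 := by linarith
    rw [h]
    field_simp
  have hfb : 1 ≤ ∑' i, (s i : ℝ) * b ^ (i + 1) := by
    have h1 := (summable_digits hC hb0.le hb1).sum_le_tsum {0, j} (fun i _ => by positivity)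
    rw [Finset.sum_pair (by omega)] at h1
    have h2 : 0 < b ^ (0 + 1) := by positivity
    have h3 : 0 < b ^ (j + 1) := by positivity
    nlinarith
  obtain ⟨x, hx, hfx⟩ := intermediate_value_Icc hab.le hcont ⟨hfa, hfb⟩
  exact ⟨x, ha0.trans_le hx.1, hx.2.trans_lt hb1, hfx⟩

theorem exists_alphaSeq_eq {s : ℕ → ℕ} (hinf : InfiniteSeq s)
    (hs : ∀ k, 1 ≤ k → lexLe (fun i => s (k + i)) s) : ∃ q : ℝ, 1 < q ∧ alphaSeq q = s := by
  have hC : ∀ i, s i ≤ s 0 := by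
    intro i
    rcases Nat.eq_zero_or_pos i with rfl | hi
    · exact le_rfl
    rcases hs i hi with ⟨n, hn, hlt⟩ | heq
    · rcases Nat.eq_zero_or_pos n with rfl | hn0
      · exact hlt.le
      · exact (hn 0 hn0).le
    · exact (congrFun heq 0).le
  obtain ⟨x, hx0, hx1, hx⟩ := exists_base hinf hC
  have hq : 1 < x⁻¹ := (one_lt_inv₀ hx0).2 hx1
  have hCn : ∀ n i, s (n + i) ≤ s 0 := fun n i => hC _
  have hsum : ∀ n, Summable fun i => (s (n + i) : ℝ) * x ^ (i + 1) := fun n =>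
    summable_digits (hCn n) hx0.le hx1
  set y : ℕ → ℝ := fun n => ∑' i, (s (n + i) : ℝ) * x ^ (i + 1) with hy
  have hy0 : y 0 = 1 := by simpa [hy] using hx
  have hpos : ∀ n, 0 < y n := by
    intro n
    obtain ⟨j, hj, hsj⟩ := hinf n
    obtain ⟨i, rfl⟩ := Nat.exists_eq_add_of_le hj
    refine (hsum n).tsum_pos (fun i => by positivity) i ?_
    have : 0 < s (n + i) := Nat.pos_of_ne_zero hsj
    positivity
  have hrec : ∀ n, y (n + 1) = x⁻¹ * y n - s n := by
    intro n
    have h1 : y n = x * s n + x * y (n + 1) := by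
      simp only [hy]
      rw [(hsum n).tsum_eq_zero_add, ← tsum_mul_left]
      congr 1
      · simp [mul_comm]
      · refine tsum_congr fun i => ?_
        rw [show n + (i + 1) = n + 1 + i by ring]
        ring
    rw [h1]
    field_simp
    ring
  have hle : ∀ n, y n ≤ 1 :=
    rem_le_one hq hy0 hpos (fun n => tsum_digits_le (hCn n) hx0.le hx1) hrec hs
  exact ⟨x⁻¹, hq, alphaSeq_eq_of_rem hq hy0 hpos hle hrec⟩

/-- Proposition 2.1. The map `q ↦ (α_i(q))` is a strictly increasing bijection
from `(1,∞)` onto the set of infinite sequences `(α_i)` of nonnegative integers satisfying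
`α_{k+1} α_{k+2} … ≤ α_1 α_2 …` for all `k ≥ 1`. -/
theorem alpha_strict_mono_bijection :
    (∀ q r : ℝ, 1 < q → q < r → lexLt (alphaSeq q) (alphaSeq r)) ∧
    (∀ q : ℝ, 1 < q →
      InfiniteSeq (alphaSeq q) ∧
        ∀ k, 1 ≤ k → lexLe (fun i => alphaSeq q (k + i)) (alphaSeq q)) ∧
    (∀ s : ℕ → ℕ, InfiniteSeq s → (∀ k, 1 ≤ k → lexLe (fun i => s (k + i)) s) →
      ∃! q : ℝ, 1 < q ∧ alphaSeq q = s) := by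
  refine ⟨fun q r hq hqr => alphaSeq_strictMono hq hqr,
    fun q hq => ⟨alphaSeq_infinite hq, fun k _ => alphaSeq_tail_le hq k⟩, fun s hinf hs => ?_⟩
  obtain ⟨q, hq, hqs⟩ := exists_alphaSeq_eq hinf hs
  have hirr : ¬ lexLt s s := fun ⟨n, _, hn⟩ => lt_irrefl _ hn
  refine ⟨q, ⟨hq, hqs⟩, fun r hr => ?_⟩
  obtain ⟨hr, hrs⟩ := hr
  rcases lt_trichotomy r q with h | h | h
  · have h1 := alphaSeq_strictMono hr h
    rw [hqs, hrs] at h1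
    exact absurd h1 hirr
  · exact h
  · have h1 := alphaSeq_strictMono hq h
    rw [hqs, hrs] at h1
    exact absurd h1 hirr
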